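/- Let α ∈ (0,1) ∪ (1,2] and p, q ∈ (0,1]. Define f_α^{[1]}(x, y) = (x^{1−α} − y^{1−α})/(x − y) for x ≠ y and f_α^{[1]}(x, x) = (1−α)x^{−α} for x, y > 0 (the first divided difference of f_α(x) = x^{1−α}). Then 0 ≤ (√(pq)/(1−α))·f_α^{[1]}(p^{1/α}, q^{1/α}) ≤ 1. -/

import Mathlib

/-!
Write `p = exp (α s)` and `q = exp (α t)`, so that the nodes of the divided difference are `exp s`
and `exp t`, and `√(pq) = exp (α (s + t) / 2)`. The identity
`exp s - exp t = (s - t) exp ((s + t) / 2) sinhc ((s - t) / 2)` and its analogue for the powers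
`exp s ^ (1 - α)` and `exp t ^ (1 - α)` make every exponential factor cancel: the quantity equals
`sinhc ((1 - α) d) / sinhc d` with `d = (s - t) / 2`, also on the diagonal `d = 0`. It is positive,
and it is at most `1` because `|1 - α| ≤ 1` and `sinhc` is even and increasing on `[0, ∞)`, its
values there being slopes of secants of the convex function `sinh`.
-/

noncomputable section

/-- The first divided difference of the function `f_α(x) = x^{1−α}`. -/
def divDiff (α : ℝ) (x y : ℝ) : ℝ :=
  if x = y then (1 - α) * x ^ (-α) else (x ^ (1 - α) - y ^ (1 - α)) / (x - y)

/-- The hyperbolic analogue of `Real.sinc`: the function `sinh x / x`, extended continuously by the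
value `1` at `0`. Ratios of its values express divided differences of powers. -/
def sinhc (x : ℝ) : ℝ :=
  if x = 0 then 1 else Real.sinh x / x

theorem sinhc_zero : sinhc 0 = 1 :=
  if_pos rfl

theorem sinhc_of_ne_zero {x : ℝ} (hx : x ≠ 0) : sinhc x = Real.sinh x / x :=
  if_neg hx

theorem mul_sinhc (x : ℝ) : x * sinhc x = Real.sinh x := by
  rcases eq_or_ne x 0 with rfl | hx
  · rw [zero_mul, Real.sinh_zero]
  · rw [sinhc_of_ne_zero hx, mul_div_cancel₀ _ hx]

theorem sinhc_neg (x : ℝ) : sinhc (-x) = sinhc x := by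
  rcases eq_or_ne x 0 with rfl | hx
  · rw [neg_zero]
  · rw [sinhc_of_ne_zero hx, sinhc_of_ne_zero (neg_ne_zero.2 hx), Real.sinh_neg, neg_div_neg_eq]

theorem sinhc_abs (x : ℝ) : sinhc |x| = sinhc x := by
  rcases abs_choice x with h | h <;> rw [h]
  exact sinhc_neg x

theorem convexOn_sinh : ConvexOn ℝ (Set.Ici 0) Real.sinh := by
  refine MonotoneOn.convexOn_of_deriv (convex_Ici 0) Real.continuous_sinh.continuousOn
    Real.differentiable_sinh.differentiableOn ?_
  rw [Real.deriv_sinh]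
  exact Real.cosh_strictMonoOn.monotoneOn.mono interior_subset

theorem sinhc_monotoneOn : MonotoneOn sinhc (Set.Ici 0) := by
  intro x (hx : 0 ≤ x) y (hy : 0 ≤ y) hxy
  rcases hy.eq_or_lt with rfl | hy_pos
  · rw [le_antisymm hxy hx]
  rcases hx.eq_or_lt with rfl | hx_pos
  · rw [sinhc_zero, sinhc_of_ne_zero hy_pos.ne', one_le_div hy_pos]
    exact Real.self_le_sinh_iff.2 hy
  · have secant_le := convexOn_sinh.secant_mono Set.self_mem_Ici hx hy hx_pos.ne' hy_pos.ne' hxy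
    simpa only [Real.sinh_zero, sub_zero, ← sinhc_of_ne_zero hx_pos.ne',
      ← sinhc_of_ne_zero hy_pos.ne'] using secant_le

theorem sinhc_le_sinhc {x y : ℝ} (h : |x| ≤ |y|) : sinhc x ≤ sinhc y := by
  rw [← sinhc_abs x, ← sinhc_abs y]
  exact sinhc_monotoneOn (abs_nonneg x) (abs_nonneg y) h

theorem sinhc_pos (x : ℝ) : 0 < sinhc x :=
  calc
    0 < sinhc 0 := sinhc_zero ▸ one_pos
    _ ≤ sinhc x := sinhc_le_sinhc (abs_zero.trans_le (abs_nonneg x))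

theorem exp_sub_exp_eq_mul_sinhc (s t : ℝ) :
    Real.exp s - Real.exp t = (s - t) * Real.exp ((s + t) / 2) * sinhc ((s - t) / 2) := by
  have hs : Real.exp s = Real.exp ((s + t) / 2) * Real.exp ((s - t) / 2) := by
    rw [← Real.exp_add]; ring_nf
  have ht : Real.exp t = Real.exp ((s + t) / 2) * Real.exp (-((s - t) / 2)) := by
    rw [← Real.exp_add]; ring_nf
  calc
    Real.exp s - Real.exp t = 2 * Real.exp ((s + t) / 2) * Real.sinh ((s - t) / 2) := by
      rw [hs, ht, Real.sinh_eq]; ring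
    _ = (s - t) * Real.exp ((s + t) / 2) * sinhc ((s - t) / 2) := by
      rw [← mul_sinhc]; ring

theorem divDiff_exp (α s t : ℝ) :
    divDiff α (Real.exp s) (Real.exp t) = (1 - α) * Real.exp (-(α * ((s + t) / 2))) *
      (sinhc ((1 - α) * ((s - t) / 2)) / sinhc ((s - t) / 2)) := by
  rcases eq_or_ne s t with rfl | hst
  · rw [divDiff, if_pos rfl, ← Real.exp_mul, sub_self, zero_div, mul_zero, sinhc_zero]
    ring_nf
  · have hexp : Real.exp ((s * (1 - α) + t * (1 - α)) / 2) =
        Real.exp (-(α * ((s + t) / 2))) * Real.exp ((s + t) / 2) := by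
      rw [← Real.exp_add]; ring_nf
    have harg : (s * (1 - α) - t * (1 - α)) / 2 = (1 - α) * ((s - t) / 2) := by ring
    have hsub : s - t ≠ 0 := sub_ne_zero.2 hst
    have hsinhc : sinhc ((s - t) / 2) ≠ 0 := (sinhc_pos _).ne'
    rw [divDiff, if_neg (Real.exp_injective.ne hst), ← Real.exp_mul, ← Real.exp_mul,
      exp_sub_exp_eq_mul_sinhc (s * (1 - α)), exp_sub_exp_eq_mul_sinhc s, hexp, harg]
    field_simp

theorem sqrt_exp_mul_exp (x y : ℝ) :
    √(Real.exp x * Real.exp y) = Real.exp ((x + y) / 2) := by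
  rw [← Real.exp_add, Real.exp_half]

theorem exists_exp_mul_eq {α p : ℝ} (hα : α ≠ 0) (hp : 0 < p) : ∃ s, Real.exp (α * s) = p :=
  ⟨Real.log p / α, by rw [mul_div_cancel₀ _ hα, Real.exp_log hp]⟩

theorem exp_mul_rpow_one_div {α : ℝ} (hα : α ≠ 0) (s : ℝ) :
    Real.exp (α * s) ^ (1 / α) = Real.exp s := by
  rw [← Real.exp_mul, mul_one_div, mul_div_cancel_left₀ _ hα]

theorem sqrt_div_mul_divDiff_exp {α : ℝ} (hα₀ : α ≠ 0) (hα₁ : α ≠ 1) (s t : ℝ) :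
    √(Real.exp (α * s) * Real.exp (α * t)) / (1 - α) *
        divDiff α (Real.exp (α * s) ^ (1 / α)) (Real.exp (α * t) ^ (1 / α)) =
      sinhc ((1 - α) * ((s - t) / 2)) / sinhc ((s - t) / 2) := by
  have hβ : 1 - α ≠ 0 := sub_ne_zero.2 hα₁.symm
  have hsqrt : √(Real.exp (α * s) * Real.exp (α * t)) = Real.exp (α * ((s + t) / 2)) := by
    rw [sqrt_exp_mul_exp]; ring_nf
  rw [exp_mul_rpow_one_div hα₀, exp_mul_rpow_one_div hα₀, hsqrt, divDiff_exp, Real.exp_neg]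
  field_simp

theorem sinhc_mul_div_sinhc_le_one {b : ℝ} (hb : |b| ≤ 1) (d : ℝ) :
    sinhc (b * d) / sinhc d ≤ 1 := by
  refine (div_le_one (sinhc_pos d)).2 (sinhc_le_sinhc ?_)
  rw [abs_mul]
  exact mul_le_of_le_one_left (abs_nonneg d) hb

theorem stmt19_general (α p q : ℝ)
    (hα : α ∈ Set.Ioo (0 : ℝ) 1 ∪ Set.Ioc (1 : ℝ) 2) (hp : 0 < p) (hq : 0 < q) :
    0 ≤ √(p * q) / (1 - α) * divDiff α (p ^ (1 / α)) (q ^ (1 / α)) ∧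
    √(p * q) / (1 - α) * divDiff α (p ^ (1 / α)) (q ^ (1 / α)) ≤ 1 := by
  have hα₀ : α ≠ 0 := by rcases hα with h | h <;> linarith [h.1]
  have hα₁ : α ≠ 1 := hα.elim (fun h => h.2.ne) (fun h => h.1.ne')
  have hβ : |1 - α| ≤ 1 := by
    rw [abs_le]
    rcases hα with h | h <;> constructor <;> linarith [h.1, h.2]
  obtain ⟨s, rfl⟩ := exists_exp_mul_eq hα₀ hp
  obtain ⟨t, rfl⟩ := exists_exp_mul_eq hα₀ hq
  rw [sqrt_div_mul_divDiff_exp hα₀ hα₁]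
  exact ⟨(div_pos (sinhc_pos _) (sinhc_pos _)).le, sinhc_mul_div_sinhc_le_one hβ _⟩

/-- For `α ∈ (0,1) ∪ (1,2]` and `p, q ∈ (0,1]`:
`0 ≤ (√(pq)/(1−α))·f_α^{[1]}(p^{1/α}, q^{1/α}) ≤ 1`. -/
theorem stmt19 (α p q : ℝ)
    (hα : α ∈ Set.Ioo (0 : ℝ) 1 ∪ Set.Ioc (1 : ℝ) 2)
    (hp : p ∈ Set.Ioc (0 : ℝ) 1) (hq : q ∈ Set.Ioc (0 : ℝ) 1) :
    0 ≤ Real.sqrt (p * q) / (1 - α) * divDiff α (p ^ (1 / α)) (q ^ (1 / α)) ∧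
    Real.sqrt (p * q) / (1 - α) * divDiff α (p ^ (1 / α)) (q ^ (1 / α)) ≤ 1 :=
  stmt19_general α p q hα hp.1 hq.1
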